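/- arXiv:1205.3257 — 2 statements merged into one kernel-verified Lean document; each statement's English description precedes it below -/
import Mathlib

section
/- For every d ≥ 1 and every integer m with ⌊(d+2)/2⌋ ≤ m ≤ d, the set of binary forms in ℝ[x,y]_d of real Waring rank exactly m has nonempty interior in the Euclidean topology on coefficients; i.e., every such m is a typical rank. Conversely, no m outside this range is typical: the set of forms of rank m has empty interior if m < ⌊(d+2)/2⌋ or m > d. -/
open MvPolynomial

noncomputable def diffOp (h f : MvPolynomial (Fin 2) ℝ) : MvPolynomial (Fin 2) ℝ :=
  ∑ e ∈ h.support, (MvPolynomial.coeff e h) •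
    ((fun p => pderiv (0 : Fin 2) p)^[e 0] ((fun p => pderiv (1 : Fin 2) p)^[e 1] f))

noncomputable def lin (a b : ℝ) : MvPolynomial (Fin 2) ℝ := a • X 0 + b • X 1

noncomputable def toForm (m : ℕ) (a : Fin (m + 1) → ℝ) : MvPolynomial (Fin 2) ℝ :=
  ∑ i : Fin (m + 1), a i • (X 0 ^ (i : ℕ) * X 1 ^ (m - (i : ℕ)))

def hasWaringDecomp (d r : ℕ) (f : MvPolynomial (Fin 2) ℝ) : Prop :=
  ∃ c a b : Fin r → ℝ, f = ∑ i, c i • (lin (a i) (b i)) ^ d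

noncomputable def waringRank (d : ℕ) (f : MvPolynomial (Fin 2) ℝ) : ℕ :=
  sInf {r | hasWaringDecomp d r f}

namespace TR
open Polynomial hiding X C
open scoped Matrix

def RR (d r : ℕ) : Set (Fin (d+1) → ℝ) :=
  {s | ∃ c a b : Fin r → ℝ, ∀ j : Fin (d+1), s j = ∑ i, c i * (a i ^ (j:ℕ) * b i ^ (d - (j:ℕ)))}

def AA (d r : ℕ) : Set (Fin (d+1) → ℝ) :=
  {s | ∃ c t : Fin r → ℝ, ∀ j : Fin (d+1), s j = ∑ i, c i * t i ^ (j:ℕ)}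

noncomputable def pr (d : ℕ) (p : ℝ[X]) : (Fin (d+1) → ℝ) →ₗ[ℝ] ℝ :=
  ∑ j : Fin (d+1), p.coeff (j:ℕ) • LinearMap.proj j

lemma pr_apply (d : ℕ) (p : ℝ[X]) (s : Fin (d+1) → ℝ) :
    pr d p s = ∑ j : Fin (d+1), p.coeff (j:ℕ) * s j := by
  simp [pr]

lemma pr_pow (d : ℕ) (p : ℝ[X]) (hp : p.natDegree ≤ d) (t : ℝ) :
    pr d p (fun j => t ^ (j:ℕ)) = p.eval t := by
  rw [pr_apply, Polynomial.eval_eq_sum_range' (Nat.lt_succ_of_le hp),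
    Finset.sum_range]

lemma pr_sum (d : ℕ) (p : ℝ[X]) (hp : p.natDegree ≤ d) {r : ℕ} (c t : Fin r → ℝ)
    (s : Fin (d+1) → ℝ) (hs : ∀ j : Fin (d+1), s j = ∑ i, c i * t i ^ (j:ℕ)) :
    pr d p s = ∑ i, c i * p.eval (t i) := by
  have : s = ∑ i, c i • (fun j : Fin (d+1) => t i ^ (j:ℕ)) := by
    ext j; simp [hs]
  rw [this, map_sum]
  simp [pr_pow d p hp]

lemma pr_ne_zero (d : ℕ) (p : ℝ[X]) (hp : p.natDegree ≤ d) (h0 : p ≠ 0) : pr d p ≠ 0 := by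
  intro h
  apply h0
  have : ∀ t, p.eval t = 0 := fun t => by rw [← pr_pow d p hp, h]; rfl
  exact Polynomial.funext (by simpa using this)

lemma dense_ne {E : Type*} [NormedAddCommGroup E] [NormedSpace ℝ E] [FiniteDimensional ℝ E]
    {ι : Type*} [Finite ι] (φ : ι → E →ₗ[ℝ] ℝ) (h : ∀ i, φ i ≠ 0) :
    Dense {x | ∀ i, φ i x ≠ 0} := by
  have : {x | ∀ i, φ i x ≠ 0} = ⋂ i, {x | φ i x ≠ 0} := by ext; simp
  rw [this]
  have : CompleteSpace E := FiniteDimensional.complete ℝ E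
  apply dense_iInter_of_isOpen
  · intro i
    exact isOpen_ne_fun (φ i).continuous_of_finiteDimensional continuous_const
  · intro i
    obtain ⟨w, hw⟩ : ∃ w, φ i w ≠ 0 := by
      by_contra! hh
      exact h i (LinearMap.ext hh)
    intro x
    by_cases hx : φ i x = 0
    · have hc : Filter.Tendsto (fun e : ℝ => x + e • w) (nhdsWithin 0 {0}ᶜ) (nhds x) := by
        have : Filter.Tendsto (fun e : ℝ => x + e • w) (nhds 0) (nhds (x + (0:ℝ) • w)) :=
          Continuous.tendsto (by fun_prop) 0
        simpa using this.mono_left nhdsWithin_le_nhds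
      refine mem_closure_of_tendsto hc ?_
      filter_upwards [self_mem_nhdsWithin] with e he
      simp only [map_add, map_smul, hx, zero_add, smul_eq_mul]
      exact mul_ne_zero he hw
    · exact subset_closure hx

lemma AA_sub_RR (d r : ℕ) : AA d r ⊆ RR d r := by
  rintro s ⟨c, t, h⟩
  exact ⟨c, t, fun _ => 1, by simpa using h⟩

lemma RR_sub_cl (d r : ℕ) : RR d r ⊆ closure (AA d r) := by
  rintro s ⟨c, a, b, h⟩
  have hd : Dense {b : Fin r → ℝ | ∀ i, (LinearMap.proj i : (Fin r → ℝ) →ₗ[ℝ] ℝ) b ≠ 0} := by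
    apply dense_ne
    intro i hi
    have := LinearMap.congr_fun hi (fun _ => 1)
    simp at this
  let F : (Fin r → ℝ) → (Fin (d+1) → ℝ) := fun b j =>
    ∑ i, c i * (a i ^ (j:ℕ) * b i ^ (d - (j:ℕ)))
  have hF : Continuous F := by fun_prop
  have hs : s = F b := by ext j; exact h j
  rw [hs]
  have := hd b
  refine (map_mem_closure hF this ?_)
  intro b hb
  simp only [Set.mem_ofPred_eq, LinearMap.proj_apply] at hb
  refine ⟨fun i => c i * b i ^ d, fun i => a i / b i, fun j => ?_⟩
  refine Finset.sum_congr rfl fun i _ => ?_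
  have h1 : b i ^ d = b i ^ (j:ℕ) * b i ^ (d - (j:ℕ)) := by
    rw [← pow_add]; congr 1; omega
  have := hb i
  show _ = c i * b i ^ d * (a i / b i) ^ (j:ℕ)
  rw [h1, div_pow]
  field_simp

lemma RR_mono (d : ℕ) {r r' : ℕ} (h : r ≤ r') : RR d r ⊆ RR d r' := by
  induction r', h using Nat.le_induction with
  | base => exact subset_rfl
  | succ n hn ih =>
    refine ih.trans ?_
    rintro s ⟨c, a, b, h⟩
    exact ⟨Fin.snoc c 0, Fin.snoc a 0, Fin.snoc b 0, fun j => by simp [Fin.sum_univ_castSucc, h]⟩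

lemma AA_mono (d : ℕ) {r r' : ℕ} (h : r ≤ r') : AA d r ⊆ AA d r' := by
  induction r', h using Nat.le_induction with
  | base => exact subset_rfl
  | succ n hn ih =>
    refine ih.trans ?_
    rintro s ⟨c, a, h⟩
    exact ⟨Fin.snoc c 0, Fin.snoc a 0, fun j => by simp [Fin.sum_univ_castSucc, h]⟩

/-- if a degree `d` squarefree real-rooted polynomial is apolar then rank at most `d` -/
lemma mem_AA (d : ℕ) (t : Fin d → ℝ) (ht : Function.Injective t) (s : Fin (d+1) → ℝ)
    (h : pr d (∏ i, (Polynomial.X - Polynomial.C (t i))) s = 0) : s ∈ AA d d := by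
  have hV : IsUnit (Matrix.vandermonde t)ᵀ.det := by
    rw [Matrix.det_transpose]
    exact isUnit_iff_ne_zero.mpr (Matrix.det_vandermonde_ne_zero_iff.mpr ht)
  set c := (Matrix.vandermonde t)ᵀ⁻¹.mulVec (fun j => s j.castSucc) with hc
  have hVc : (Matrix.vandermonde t)ᵀ.mulVec c = fun j => s j.castSucc := by
    rw [hc, Matrix.mulVec_mulVec, Matrix.mul_nonsing_inv _ hV, Matrix.one_mulVec]
  have h1 : ∀ j : Fin d, s j.castSucc = ∑ i, c i * t i ^ (j:ℕ) := by
    intro j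
    rw [← congr_fun hVc j]
    simp [Matrix.mulVec, dotProduct, Matrix.vandermonde, mul_comm]
  set s' : Fin (d+1) → ℝ := fun j => ∑ i, c i * t i ^ (j:ℕ) with hs'
  set p : ℝ[X] := ∏ i, (Polynomial.X - Polynomial.C (t i)) with hp
  have hdeg : p.natDegree = d := by simp [hp, Polynomial.natDegree_prod_of_monic _ _ (fun i _ => monic_X_sub_C (t i))]
  have hmon : p.Monic := monic_prod_of_monic _ _ (fun i _ => monic_X_sub_C (t i))
  have h2 : pr d p s' = 0 := by
    rw [pr_sum d p hdeg.le c t s' (fun j => rfl)]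
    refine Finset.sum_eq_zero fun i _ => ?_
    rw [hp, Polynomial.eval_prod, Finset.prod_eq_zero (Finset.mem_univ i) (by simp), mul_zero]
  have h3 : p.coeff d = 1 := by
    have := hmon.coeff_natDegree; rwa [hdeg] at this
  have h4 : pr d p (s - s') = 0 := by rw [map_sub, h, h2, sub_zero]
  rw [pr_apply, Fin.sum_univ_castSucc] at h4
  simp only [Pi.sub_apply, h1, hs', Fin.val_castSucc, sub_self, mul_zero, Finset.sum_const_zero, zero_add, Fin.val_last, h3, one_mul] at h4
  refine ⟨c, t, fun j => ?_⟩
  refine Fin.lastCases ?_ (fun j => ?_) j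
  · simpa [sub_eq_zero] using h4
  · simpa using h1 j

lemma dense_AA (d : ℕ) (hd : 1 ≤ d) : Dense (AA d d) := by
  obtain ⟨n, rfl⟩ : ∃ n, d = n + 1 := ⟨d - 1, by omega⟩
  let t : Fin n → ℝ := fun i => (i : ℝ)
  have ht : Function.Injective t := by
    intro i j h; simpa [t, Fin.ext_iff] using h
  let P : ℝ[X] := ∏ i, (Polynomial.X - Polynomial.C (t i))
  have hmon : P.Monic := monic_prod_of_monic _ _ (fun i _ => monic_X_sub_C (t i))
  have hdeg : P.natDegree = n := by simp [P, Polynomial.natDegree_prod_of_monic _ _ (fun i _ => monic_X_sub_C (t i))]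
  let φ : Option (Fin n) → (Fin (n+1+1) → ℝ) →ₗ[ℝ] ℝ := fun o =>
    match o with
    | none => pr (n+1) P
    | some i => pr (n+1) ((Polynomial.X - Polynomial.C (t i)) * P)
  have hlin : ∀ (v : ℝ) s, pr (n+1) ((Polynomial.X - Polynomial.C v) * P) s = pr (n+1) (Polynomial.X * P) s - v * pr (n+1) P s := by
    intro v s
    simp only [pr_apply, Finset.mul_sum, ← Finset.sum_sub_distrib]
    refine Finset.sum_congr rfl fun j _ => ?_
    rw [sub_mul, Polynomial.coeff_sub, Polynomial.coeff_C_mul]; ring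
  have hφ : Dense {x | ∀ i, φ i x ≠ 0} := by
    apply dense_ne
    rintro (_ | i)
    · exact pr_ne_zero _ _ (by omega) hmon.ne_zero
    · have hm2 := (monic_X_sub_C (t i)).mul hmon
      refine pr_ne_zero _ _ ?_ hm2.ne_zero
      rw [(monic_X_sub_C (t i)).natDegree_mul hmon, hdeg]; simp; omega
  refine hφ.mono ?_
  intro s hs
  have h0 : pr (n+1) P s ≠ 0 := hs none
  have h1 : ∀ i, pr (n+1) ((Polynomial.X - Polynomial.C (t i)) * P) s ≠ 0 := fun i => hs (some i)
  set v := pr (n+1) (Polynomial.X * P) s / pr (n+1) P s with hv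
  refine mem_AA (n+1) (Fin.snoc t v) ?_ s ?_
  · rw [Fin.snoc_injective_iff]
    refine ⟨ht, ?_⟩
    rintro ⟨i, hi⟩
    apply h1 i
    rw [hlin, hi, hv]; field_simp; simp
  · rw [Fin.prod_univ_castSucc]
    simp only [Fin.snoc_castSucc, Fin.snoc_last]
    rw [mul_comm, hlin, hv]; field_simp; simp


noncomputable def Phi (d m : ℕ) (x : (Fin m → ℝ) × (Fin m → ℝ)) : Fin (d+1) → ℝ :=
  fun j => ∑ i, x.1 i * x.2 i ^ (j:ℕ)

lemma Phi_contDiff (d m : ℕ) : ContDiff ℝ 1 (Phi d m) := by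
  unfold Phi
  fun_prop

lemma exists_poly (d : ℕ) (f : (Fin (d+1) → ℝ) →ₗ[ℝ] ℝ) :
    ∃ p : ℝ[X], p.natDegree ≤ d ∧ f = pr d p := by
  refine ⟨∑ j : Fin (d+1), Polynomial.C (f (Pi.single j 1)) * Polynomial.X ^ (j:ℕ), ?_, ?_⟩
  · refine Polynomial.natDegree_sum_le_of_forall_le _ _ fun j _ => ?_
    exact (Polynomial.natDegree_C_mul_X_pow_le _ _).trans (by omega)
  · refine LinearMap.pi_ext' fun j => LinearMap.ext_ring ?_
    simp only [LinearMap.comp_apply, LinearMap.single_apply, pr_apply, Polynomial.finsetSum_coeff,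
      Polynomial.coeff_C_mul, Polynomial.coeff_X_pow]
    rw [Finset.sum_eq_single j]
    · rw [Finset.sum_eq_single j]
      · simp
      · intro b _ hb
        rw [if_neg (fun h => hb (Fin.ext h.symm)), mul_zero]
      · simp
    · intro b _ hb
      simp [Pi.single_eq_of_ne hb]
    · simp

lemma Phi_surj (d m : ℕ) (hm : d + 1 ≤ 2 * m) (c t : Fin m → ℝ) (hc : ∀ i, c i ≠ 0)
    (ht : Function.Injective t) : (fderiv ℝ (Phi d m) (c, t)).range = ⊤ := by
  by_contra hne
  obtain ⟨f, hf0, hf⟩ := Submodule.exists_le_ker_of_lt_top _ (lt_top_iff_ne_top.mpr hne)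
  obtain ⟨p, hp, rfl⟩ := exists_poly d f
  have hp0 : p ≠ 0 := by
    rintro rfl
    apply hf0
    ext; simp [pr_apply]
  have hdiff : HasFDerivAt (Phi d m) (fderiv ℝ (Phi d m) (c,t)) (c,t) :=
    ((Phi_contDiff d m).differentiable (by norm_num) _).hasFDerivAt
  have h1 : HasFDerivAt (fun x => pr d p (Phi d m x))
      ((LinearMap.toContinuousLinearMap (pr d p)).comp (fderiv ℝ (Phi d m) (c,t))) (c,t) :=
    (LinearMap.toContinuousLinearMap (pr d p)).hasFDerivAt.comp (c,t) hdiff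
  have h0 : (LinearMap.toContinuousLinearMap (pr d p)).comp (fderiv ℝ (Phi d m) (c,t)) = 0 := by
    refine ContinuousLinearMap.ext fun w => ?_
    exact hf (LinearMap.mem_range_self _ w)
  rw [h0] at h1
  have h2 : (fun x => pr d p (Phi d m x)) = fun x => ∑ i, x.1 i * p.eval (x.2 i) := by
    ext x
    exact pr_sum d p hp x.1 x.2 _ (fun j => rfl)
  rw [h2] at h1
  let P1 : Fin m → ((Fin m → ℝ) × (Fin m → ℝ)) →L[ℝ] ℝ := fun i =>
    (ContinuousLinearMap.proj i).comp (ContinuousLinearMap.fst ℝ (Fin m → ℝ) (Fin m → ℝ))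
  let P2 : Fin m → ((Fin m → ℝ) × (Fin m → ℝ)) →L[ℝ] ℝ := fun i =>
    (ContinuousLinearMap.proj i).comp (ContinuousLinearMap.snd ℝ (Fin m → ℝ) (Fin m → ℝ))
  have h3 : HasFDerivAt (fun x : (Fin m → ℝ) × (Fin m → ℝ) => ∑ i, x.1 i * p.eval (x.2 i))
      (∑ i, (c i • (p.derivative.eval (t i) • P2 i) + p.eval (t i) • P1 i)) (c,t) := by
    refine HasFDerivAt.fun_sum fun i _ => ?_
    have ha : HasFDerivAt (fun x : (Fin m → ℝ) × (Fin m → ℝ) => x.1 i) (P1 i) (c,t) :=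
      (P1 i).hasFDerivAt
    have hb : HasFDerivAt (fun x : (Fin m → ℝ) × (Fin m → ℝ) => x.2 i) (P2 i) (c,t) :=
      (P2 i).hasFDerivAt
    have hb' : HasFDerivAt (fun x : (Fin m → ℝ) × (Fin m → ℝ) => p.eval (x.2 i))
        (p.derivative.eval (t i) • P2 i) (c,t) :=
      HasDerivAt.comp_hasFDerivAt (h₂ := fun y => p.eval y) (c,t) (p.hasDerivAt (t i)) hb
    exact ha.mul hb'
  have h4 := h1.unique h3
  have hA : ∀ i, p.eval (t i) = 0 := by
    intro i
    have := congr_arg (fun L => L (Pi.single i 1, 0)) h4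
    simp [P1, P2, Pi.single_apply] at this
    exact this.symm
  have hB : ∀ i, p.derivative.eval (t i) = 0 := by
    intro i
    have := congr_arg (fun L => L (0, Pi.single i 1)) h4
    simp [P1, P2, Pi.single_apply, hc] at this
    exact this
  have hdvd : ∏ i, (Polynomial.X - Polynomial.C (t i)) ^ 2 ∣ p := by
    refine Finset.prod_dvd_of_coprime ?_ ?_
    · intro i _ j _ hij
      exact (Polynomial.pairwise_coprime_X_sub_C ht hij).pow
    · intro i _
      rw [← Polynomial.le_rootMultiplicity_iff hp0]
      exact (Polynomial.one_lt_rootMultiplicity_iff_isRoot hp0).mpr ⟨hA i, hB i⟩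
  have := Polynomial.natDegree_le_of_dvd hdvd hp0
  rw [Polynomial.natDegree_prod_of_monic _ _ (fun i _ => (Polynomial.monic_X_sub_C (t i)).pow 2)] at this
  simp at this
  omega

lemma AA_sub_cl_int (d m : ℕ) (hm : d + 1 ≤ 2 * m) : AA d m ⊆ closure (interior (AA d m)) := by
  rintro s ⟨c, t, h⟩
  have hs : s = Phi d m (c, t) := by ext j; exact h j
  have hd1 : Dense {c : Fin m → ℝ | ∀ i, (LinearMap.proj i : (Fin m → ℝ) →ₗ[ℝ] ℝ) c ≠ 0} := by
    apply dense_ne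
    intro i hi
    have := LinearMap.congr_fun hi (fun _ => 1)
    simp at this
  have hd2 : Dense {t : Fin m → ℝ | ∀ q : {q : Fin m × Fin m // q.1 ≠ q.2},
      ((LinearMap.proj q.1.1 : (Fin m → ℝ) →ₗ[ℝ] ℝ) -
        (LinearMap.proj q.1.2 : (Fin m → ℝ) →ₗ[ℝ] ℝ)) t ≠ 0} := by
    apply dense_ne
    rintro ⟨⟨i, j⟩, hij⟩ hi
    have := LinearMap.congr_fun hi (Pi.single i 1)
    simp only at hij
    simp [Pi.single_apply, hij.symm] at this
  rw [hs]
  refine map_mem_closure (Phi_contDiff d m).continuous (hd1.prod hd2 (c, t)) ?_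
  rintro ⟨c, t⟩ ⟨hc, ht⟩
  have hc' : ∀ i, c i ≠ 0 := hc
  have ht' : Function.Injective t := by
    intro i j hij
    by_contra hne
    exact ht ⟨(i, j), hne⟩ (by simp [hij])
  rw [mem_interior_iff_mem_nhds]
  have hst : HasStrictFDerivAt (Phi d m) (fderiv ℝ (Phi d m) (c,t)) (c,t) :=
    (Phi_contDiff d m).contDiffAt.hasStrictFDerivAt (by norm_num)
  rw [← hst.map_nhds_eq_of_surj (Phi_surj d m hm c t hc' ht'), Filter.mem_map]
  refine Filter.Eventually.of_forall fun x => ?_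
  exact ⟨x.1, x.2, fun j => rfl⟩

noncomputable def NN (D : ℕ) (p : ℝ[X]) : ℝ := ∑ j ∈ Finset.range D, |p.coeff j|

lemma NN_mul (D : ℕ) (u v : ℝ) (q : ℝ[X]) :
    NN D ((Polynomial.C u + Polynomial.C v * Polynomial.X) * q) ≤ (|u| + |v|) * NN D q := by
  have hx : NN D (Polynomial.X * q) ≤ NN D q := by
    unfold NN
    cases D with
    | zero => simp
    | succ n =>
      rw [Finset.sum_range_succ']
      simp only [Polynomial.coeff_X_mul, Polynomial.coeff_X_mul_zero, abs_zero, add_zero]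
      rw [Finset.sum_range_succ]
      linarith [abs_nonneg (q.coeff n)]
  have h1 : NN D ((Polynomial.C u + Polynomial.C v * Polynomial.X) * q) ≤
      |u| * NN D q + |v| * NN D (Polynomial.X * q) := by
    unfold NN
    rw [Finset.mul_sum, Finset.mul_sum, ← Finset.sum_add_distrib]
    refine Finset.sum_le_sum fun j _ => ?_
    rw [add_mul, mul_assoc, Polynomial.coeff_add, Polynomial.coeff_C_mul, Polynomial.coeff_C_mul,
      ← abs_mul, ← abs_mul]
    exact abs_add_le _ _
  nlinarith [abs_nonneg v]

lemma NN_nonneg (D : ℕ) (p : ℝ[X]) : 0 ≤ NN D p := Finset.sum_nonneg fun _ _ => abs_nonneg _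

lemma NN_prod (D n : ℕ) (t : Fin n → ℝ) :
    NN D (∏ i, (Polynomial.X - Polynomial.C (t i))) ≤ ∏ i, (1 + |t i|) := by
  induction n with
  | zero =>
    simp only [Finset.univ_eq_empty, Finset.prod_empty]
    unfold NN
    simp only [Polynomial.coeff_one]
    calc _ = ∑ j ∈ Finset.range D, if j = 0 then (1:ℝ) else 0 := by
          refine Finset.sum_congr rfl fun j _ => ?_
          split_ifs <;> simp
      _ ≤ 1 := by
          rw [Finset.sum_ite_eq']; split_ifs <;> norm_num
  | succ n ih =>
    rw [Fin.prod_univ_succ, Fin.prod_univ_succ]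
    have e : (Polynomial.X - Polynomial.C (t 0) : ℝ[X])
      = Polynomial.C (-t 0) + Polynomial.C 1 * Polynomial.X := by simp; ring
    rw [e]
    refine (NN_mul _ _ _ _).trans ?_
    rw [abs_neg, abs_one, add_comm]
    exact mul_le_mul_of_nonneg_left (ih _) (by positivity)

lemma pr_le (d : ℕ) (p : ℝ[X]) (s : Fin (d+1) → ℝ) : |pr d p s| ≤ NN (d+1) p * ‖s‖ := by
  rw [pr_apply, NN, Finset.sum_range, Finset.sum_mul]
  refine (Finset.abs_sum_le_sum_abs _ _).trans (Finset.sum_le_sum fun j _ => ?_)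
  rw [abs_mul]
  exact mul_le_mul_of_nonneg_left (norm_le_pi_norm s j) (abs_nonneg _)

noncomputable def s0 (d : ℕ) : Fin (d+1) → ℝ := fun j => (Complex.I ^ (j:ℕ)).re

lemma pr_s0 (d : ℕ) (p : ℝ[X]) (hp : p.natDegree ≤ d) :
    pr d p (s0 d) = (Polynomial.aeval Complex.I p).re := by
  rw [pr_apply, Polynomial.aeval_eq_sum_range' (Nat.lt_succ_of_le hp), Finset.sum_range,
    Complex.re_sum]
  refine Finset.sum_congr rfl fun j _ => ?_
  rw [Complex.smul_re]; rfl

lemma ball_disj (n : ℕ) (s : Fin (n+1+1) → ℝ) (hs : s ∈ AA (n+1) n) :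
    1 ≤ 2 ^ (n+1) * ‖s0 (n+1) - s‖ := by
  obtain ⟨c, t, h⟩ := hs
  let P : ℝ[X] := ∏ i, (Polynomial.X - Polynomial.C (t i))
  have hdeg : P.natDegree = n := by simp [P, Polynomial.natDegree_prod_of_monic _ _ (fun i _ => Polynomial.monic_X_sub_C (t i))]
  set z : ℂ := Polynomial.aeval Complex.I P with hz
  let l : ℝ[X] := Polynomial.C z.re + Polynomial.C (-z.im) * Polynomial.X
  have hl : l.natDegree ≤ 1 := by
    simp only [l]; rw [add_comm]; exact Polynomial.natDegree_linear_le
  have hlP : (l * P).natDegree ≤ n + 1 :=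
    Polynomial.natDegree_mul_le.trans (by omega)
  have h1 : pr (n+1) (l * P) s = 0 := by
    rw [pr_sum _ _ hlP c t s h]
    refine Finset.sum_eq_zero fun i _ => ?_
    rw [Polynomial.eval_mul, Polynomial.eval_prod, Finset.prod_eq_zero (Finset.mem_univ i) (by simp), mul_zero, mul_zero]
  have h2 : pr (n+1) (l * P) (s0 (n+1)) = Complex.normSq z := by
    rw [pr_s0 _ _ hlP, map_mul, ← hz]
    simp [l, Complex.normSq_apply]
  have hzn : Complex.normSq z = ∏ i, (1 + t i ^ 2) := by
    rw [hz, map_prod, map_prod]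
    refine Finset.prod_congr rfl fun i _ => ?_
    simp [Complex.normSq_apply]; ring
  have hzpos : 0 < Complex.normSq z := by
    rw [hzn]; exact Finset.prod_pos fun i _ => by positivity
  have hN : NN (n+1+1) (l * P) ≤ (|z.re| + |z.im|) * ∏ i, (1 + |t i|) := by
    refine (NN_mul _ _ _ _).trans ?_
    rw [abs_neg]
    exact mul_le_mul_of_nonneg_left (NN_prod _ _ _) (by positivity)
  have hpr : (∏ i, (1 + |t i|)) ^ 2 ≤ 2 ^ n * Complex.normSq z := by
    rw [hzn, ← Finset.prod_pow]
    calc _ ≤ ∏ i, (2 * (1 + t i ^ 2)) := by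
          refine Finset.prod_le_prod (fun i _ => by positivity) fun i _ => ?_
          rw [← sq_abs (t i)]
          nlinarith [sq_nonneg (1 - |t i|)]
      _ = _ := by rw [Finset.prod_mul_distrib]; simp
  have hzz : (|z.re| + |z.im|) ^ 2 ≤ 2 * Complex.normSq z := by
    rw [Complex.normSq_apply, ← pow_two, ← pow_two, ← sq_abs z.re, ← sq_abs z.im]
    nlinarith [sq_nonneg (|z.re| - |z.im|)]
  have hN2 : NN (n+1+1) (l * P) ≤ 2 ^ (n+1) * Complex.normSq z := by
    refine hN.trans (abs_le_of_sq_le_sq' ?_ (by positivity)).2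
    calc _ = (|z.re| + |z.im|) ^ 2 * (∏ i, (1 + |t i|)) ^ 2 := by ring
      _ ≤ (2 * Complex.normSq z) * (2 ^ n * Complex.normSq z) :=
          mul_le_mul hzz hpr (by positivity) (by positivity)
      _ = 2 ^ (n+1) * Complex.normSq z ^ 2 := by ring
      _ ≤ 2 ^ (n+1) * 2 ^ (n+1) * Complex.normSq z ^ 2 := by
          have : (1:ℝ) ≤ 2 ^ (n+1) := one_le_pow₀ (by norm_num)
          have h3 : 0 ≤ 2 ^ (n+1) * Complex.normSq z ^ 2 := by positivity
          nlinarith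
      _ = _ := by ring
  have h5 := pr_le (n+1) (l * P) (s0 (n+1) - s)
  rw [map_sub, h1, h2, sub_zero, abs_of_pos hzpos] at h5
  have h6 := h5.trans (mul_le_mul_of_nonneg_right hN2 (norm_nonneg _))
  by_contra! hlt
  nlinarith

lemma s0_not_mem (d m : ℕ) (hm : m + 1 ≤ d) : s0 d ∉ closure (AA d m) := by
  obtain ⟨n, rfl⟩ : ∃ n, d = n + 1 := ⟨d - 1, by omega⟩
  intro h
  rw [Metric.mem_closure_iff] at h
  obtain ⟨b, hb, hlt⟩ := h (1 / 2 ^ (n+1)) (by positivity)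
  have := ball_disj n b (AA_mono _ (by omega) hb)
  rw [dist_eq_norm, lt_div_iff₀ (by positivity)] at hlt
  linarith

def HH (d k : ℕ) (hk : 2 * k ≤ d) (s : Fin (d+1) → ℝ) : Matrix (Fin (k+1)) (Fin (k+1)) ℝ :=
  Matrix.of fun i j => s ⟨(i:ℕ) + j, by omega⟩

lemma HH_det (d k : ℕ) (hk : 2 * k ≤ d) (m : ℕ) (hm : m ≤ k) (s : Fin (d+1) → ℝ)
    (hs : s ∈ AA d m) : (HH d k hk s).det = 0 := by
  obtain ⟨c, t, h⟩ := hs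
  let A : Matrix (Fin m) (Fin (k+1)) ℝ := Matrix.of fun i j => t i ^ (j:ℕ)
  have hker : (Matrix.mulVecLin A).ker ≠ ⊥ := by
    apply LinearMap.ker_ne_bot_of_finrank_lt
    simp; omega
  obtain ⟨v, hv, hv0⟩ := Submodule.exists_mem_ne_zero_of_ne_bot hker
  rw [← Matrix.exists_mulVec_eq_zero_iff]
  refine ⟨v, hv0, ?_⟩
  have hH : HH d k hk s = (Matrix.of fun (i : Fin (k+1)) (l : Fin m) => c l * t l ^ (i:ℕ)) * A := by
    ext i j
    simp [HH, A, Matrix.mul_apply, h, pow_add, mul_assoc]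
  rw [hH, ← Matrix.mulVec_mulVec]
  have : A *ᵥ v = 0 := hv
  rw [this, Matrix.mulVec_zero]

lemma HH_cont (d k : ℕ) (hk : 2 * k ≤ d) : Continuous fun s => (HH d k hk s).det := by
  apply Continuous.matrix_det
  unfold HH
  fun_prop

lemma HH_interior (d k : ℕ) (hk : 2 * k ≤ d) :
    interior {s | (HH d k hk s).det = 0} = ∅ := by
  rw [Set.eq_empty_iff_forall_notMem]
  intro s hs
  let t : Fin (k+1) → ℝ := fun i => (i : ℝ)
  have ht : Function.Injective t := by
    intro i j h; simpa [t, Fin.ext_iff] using h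
  let e : Fin (d+1) → ℝ := fun j => ∑ i, t i ^ (j:ℕ)
  have he : HH d k hk e = (Matrix.vandermonde t)ᵀ * Matrix.vandermonde t := by
    ext i j
    simp [HH, e, Matrix.mul_apply, Matrix.vandermonde, pow_add]
  have hdet : (HH d k hk e).det ≠ 0 := by
    rw [he, Matrix.det_mul, Matrix.det_transpose]
    have := Matrix.det_vandermonde_ne_zero_iff.mpr ht
    exact mul_ne_zero this this
  set K := HH d k hk e with hK
  set p := (-(K⁻¹ * HH d k hk s)).charpoly with hp
  have hroot : ∀ ε : ℝ, (HH d k hk (s + ε • e)).det = K.det * p.eval ε := by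
    intro ε
    rw [hp, Matrix.eval_charpoly, ← Matrix.det_mul, mul_sub, mul_neg, ← mul_assoc,
      Matrix.mul_nonsing_inv _ (isUnit_iff_ne_zero.mpr hdet), one_mul, sub_neg_eq_add]
    congr 1
    ext i j
    simp [HH, hK, Matrix.scalar_apply, Matrix.mul_diagonal]
    ring
  have hev : ∀ᶠ ε : ℝ in nhds 0, p.IsRoot ε := by
    have hc : Filter.Tendsto (fun ε : ℝ => s + ε • e) (nhds 0) (nhds (s + (0:ℝ) • e)) :=
      Continuous.tendsto (by fun_prop) 0
    rw [zero_smul, add_zero] at hc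
    filter_upwards [hc (mem_interior_iff_mem_nhds.mp hs)] with ε hε
    have : (HH d k hk (s + ε • e)).det = 0 := hε
    rw [hroot] at this
    exact (mul_eq_zero.mp this).resolve_left hdet
  have hinf : Set.Infinite {x | p.IsRoot x} := infinite_of_mem_nhds 0 hev
  exact (Matrix.charpoly_monic _).ne_zero (Polynomial.eq_zero_of_infinite_isRoot p hinf)

noncomputable def rk (d : ℕ) (s : Fin (d+1) → ℝ) : ℕ := sInf {r | s ∈ RR d r}

lemma rk_le {d r : ℕ} {s : Fin (d+1) → ℝ} (h : s ∈ RR d r) : rk d s ≤ r := Nat.sInf_le h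

lemma rk_mem {d r : ℕ} {s : Fin (d+1) → ℝ} (h : s ∈ RR d r) : s ∈ RR d (rk d s) :=
  Nat.sInf_mem (s := {r | s ∈ RR d r}) ⟨r, h⟩

lemma core1 (d : ℕ) (hd : 1 ≤ d) (m : ℕ) (h1 : (d + 2) / 2 ≤ m) (h2 : m ≤ d) :
    (interior {s | rk d s = m}).Nonempty := by
  by_contra hne
  rw [Set.not_nonempty_iff_eq_empty] at hne
  obtain ⟨n, rfl⟩ : ∃ n, m = n + 1 := ⟨m - 1, by omega⟩
  have hA : interior (AA d (n+1)) ⊆ closure (AA d n) := by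
    intro x hx
    by_contra hxn
    have hO : IsOpen (interior (AA d (n+1)) ∩ (closure (AA d n))ᶜ) :=
      isOpen_interior.inter isClosed_closure.isOpen_compl
    have hsub : interior (AA d (n+1)) ∩ (closure (AA d n))ᶜ ⊆ {s | rk d s = n+1} := by
      rintro s ⟨ha, hb⟩
      have hs : s ∈ RR d (n+1) := AA_sub_RR _ _ (interior_subset ha)
      have hle := rk_le hs
      by_contra hne'
      have hne' : rk d s ≠ n + 1 := hne'
      exact hb (RR_sub_cl _ _ (RR_mono d (by omega) (rk_mem hs)))
    have := interior_maximal hsub hO ⟨hx, hxn⟩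
    rw [hne] at this
    exact this
  have hB : AA d (n+1) ⊆ closure (AA d n) :=
    (AA_sub_cl_int d (n+1) (by omega)).trans (closure_minimal hA isClosed_closure)
  have hC : ∀ k, n ≤ k → AA d k ⊆ closure (AA d n) := by
    intro k hk
    induction k, hk using Nat.le_induction with
    | base => exact subset_closure
    | succ k hk ih =>
      rintro s ⟨c, t, h⟩
      let s' : Fin (d+1) → ℝ := fun j => ∑ i : Fin k, c i.castSucc * t i.castSucc ^ (j:ℕ)
      let w : Fin (d+1) → ℝ := fun j => c (Fin.last k) * t (Fin.last k) ^ (j:ℕ)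
      have hs : s = s' + w := by
        ext j; simp [s', w, h, Fin.sum_univ_castSucc]
      have hs' : s' ∈ closure (AA d n) := ih ⟨_, _, fun j => rfl⟩
      rw [hs]
      refine closure_minimal hB isClosed_closure ?_
      refine map_mem_closure (f := fun x => x + w) (by fun_prop) hs' ?_
      rintro x ⟨c', t', hx⟩
      refine ⟨Fin.snoc c' (c (Fin.last k)), Fin.snoc t' (t (Fin.last k)), fun j => ?_⟩
      simp [Fin.sum_univ_castSucc, hx, w]
  have hD := (dense_AA d hd).closure_eq
  have : closure (AA d d) ⊆ closure (AA d n) := closure_minimal (hC d (by omega)) isClosed_closure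
  rw [hD] at this
  exact s0_not_mem d n (by omega) (this (Set.mem_univ _))

lemma core2 (d : ℕ) (hd : 1 ≤ d) (m : ℕ) (h : m < (d + 2) / 2 ∨ d < m) :
    interior {s | rk d s = m} = ∅ := by
  rcases h with h | h
  · rw [← Set.subset_empty_iff, ← HH_interior d (d/2) (by omega)]
    refine interior_maximal ?_ isOpen_interior
    have hcl : IsClosed {s | (HH d (d/2) (by omega) s).det = 0} :=
      isClosed_eq (HH_cont d (d/2) (by omega)) continuous_const
    have h1 := (dense_AA d hd).open_subset_closure_inter
      (isOpen_interior (s := {s | rk d s = m}))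
    refine h1.trans (closure_minimal ?_ hcl)
    rintro s ⟨hs, ha⟩
    have hs' : s ∈ {s | rk d s = m} := interior_subset hs
    rw [Set.mem_ofPred_eq] at hs'
    have h2 := rk_mem (AA_sub_RR _ _ ha)
    rw [hs'] at h2
    have h3 := RR_sub_cl _ _ h2
    refine closure_minimal ?_ hcl h3
    intro s hs
    exact HH_det d (d/2) (by omega) m (by omega) s hs
  · by_contra hne
    rw [← Ne, ← Set.nonempty_iff_ne_empty] at hne
    obtain ⟨s, hs, ha⟩ := (dense_AA d hd).inter_open_nonempty _ isOpen_interior hne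
    have hs' : s ∈ {s | rk d s = m} := interior_subset hs
    rw [Set.mem_ofPred_eq] at hs'
    have := rk_le (AA_sub_RR _ _ ha)
    omega

lemma toForm_coeff (d : ℕ) (a : Fin (d+1) → ℝ) (j : Fin (d+1)) :
    MvPolynomial.coeff (Finsupp.single 0 (j:ℕ) + Finsupp.single 1 (d - (j:ℕ))) (toForm d a) = a j := by
  have hm : ∀ i : Fin (d+1), (MvPolynomial.X 0 ^ (i:ℕ) * MvPolynomial.X 1 ^ (d - (i:ℕ)) :
      MvPolynomial (Fin 2) ℝ) = MvPolynomial.monomial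
        (Finsupp.single 0 (i:ℕ) + Finsupp.single 1 (d - (i:ℕ))) 1 := by
    intro i
    rw [MvPolynomial.X_pow_eq_monomial, MvPolynomial.X_pow_eq_monomial,
      MvPolynomial.monomial_mul, one_mul]
  simp only [toForm, hm, MvPolynomial.coeff_sum, MvPolynomial.coeff_smul, MvPolynomial.coeff_monomial]
  rw [Finset.sum_eq_single j]
  · simp
  · intro i _ hij
    rw [if_neg, smul_zero]
    intro he
    have := DFunLike.congr_fun he 0
    simp at this
    exact hij (Fin.ext this)
  · simp

lemma toForm_inj (d : ℕ) {a b : Fin (d+1) → ℝ} : toForm d a = toForm d b ↔ a = b := by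
  refine ⟨fun h => ?_, fun h => by rw [h]⟩
  ext j
  rw [← toForm_coeff d a j, h, toForm_coeff]

lemma lin_pow (d : ℕ) (a b : ℝ) :
    lin a b ^ d = toForm d (fun j => (d.choose j : ℝ) * (a ^ (j:ℕ) * b ^ (d - (j:ℕ)))) := by
  rw [lin, add_pow, Finset.sum_range, toForm]
  refine Finset.sum_congr rfl fun j _ => ?_
  simp only [MvPolynomial.smul_eq_C_mul, map_mul, map_pow, map_natCast, mul_pow]
  ring

lemma sum_lin (d r : ℕ) (c a b : Fin r → ℝ) :
    ∑ i, c i • lin (a i) (b i) ^ d =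
      toForm d (fun j => ∑ i, c i * ((d.choose j : ℝ) * (a i ^ (j:ℕ) * b i ^ (d - (j:ℕ))))) := by
  simp only [lin_pow, toForm, Finset.smul_sum, Finset.sum_smul]
  rw [Finset.sum_comm]
  simp only [smul_smul]

noncomputable def sc (d : ℕ) : (Fin (d+1) → ℝ) ≃ₜ (Fin (d+1) → ℝ) :=
  Homeomorph.piCongrRight fun j => Homeomorph.mulLeft₀ ((d.choose j : ℝ)⁻¹)
    (inv_ne_zero (Nat.cast_ne_zero.mpr (Nat.choose_pos (by omega)).ne'))

lemma sc_apply (d : ℕ) (x : Fin (d+1) → ℝ) (j : Fin (d+1)) :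
    sc d x j = (d.choose j : ℝ)⁻¹ * x j := rfl

lemma decomp_iff (d r : ℕ) (x : Fin (d+1) → ℝ) :
    hasWaringDecomp d r (toForm d x) ↔ sc d x ∈ RR d r := by
  unfold hasWaringDecomp RR
  simp only [sum_lin, toForm_inj, Set.mem_ofPred_eq, sc_apply, funext_iff]
  refine exists_congr fun c => exists_congr fun a => exists_congr fun b => forall_congr' fun j => ?_
  have : (d.choose j : ℝ) ≠ 0 := Nat.cast_ne_zero.mpr (Nat.choose_pos (by omega)).ne'
  rw [inv_mul_eq_iff_eq_mul₀ this, Finset.mul_sum]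
  simp only [mul_left_comm]

lemma rank_eq (d m : ℕ) : {x : Fin (d+1) → ℝ | waringRank d (toForm d x) = m} =
    sc d ⁻¹' {s | rk d s = m} := by
  ext x
  simp only [waringRank, decomp_iff, rk, Set.mem_preimage, Set.mem_ofPred_eq]

end TR

/-- The typical real Waring ranks of binary forms of degree d are exactly the
integers m with ⌊(d+2)/2⌋ ≤ m ≤ d: the set of forms of rank m has nonempty
interior for such m, and empty interior otherwise. -/
theorem stmt_18 (d : ℕ) (hd : 1 ≤ d) (m : ℕ) :
    ((d + 2) / 2 ≤ m ∧ m ≤ d →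
      (interior {a : Fin (d + 1) → ℝ |
        waringRank d (toForm d a) = m}).Nonempty) ∧
    (m < (d + 2) / 2 ∨ d < m →
      interior {a : Fin (d + 1) → ℝ |
        waringRank d (toForm d a) = m} = ∅) := by
  rw [TR.rank_eq, ← Homeomorph.preimage_interior]
  refine ⟨fun h => ?_, fun h => ?_⟩
  · exact (TR.core1 d hd m h.1 h.2).preimage (TR.sc d).surjective
  · rw [TR.core2 d hd m h, Set.preimage_empty]
end

section
/- Let f ∈ ℝ[x,y]_d have apolar ideal f^⊥ generated in generic degrees (degrees ((d+2)/2, (d+2)/2) for d even, ((d+1)/2, (d+3)/2) for d odd), and let m = rank f. If (f^⊥)_{m−1} contains a nonzero form s all of whose roots are real (s splits into real linear factors over ℝ), then every Euclidean neighborhood of f in ℝ[x,y]_d contains a form of real Waring rank at most m − 1; hence f is not a typical form of rank m. -/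
open MvPolynomial

/-- p is a nonzero constant times a product of m real linear forms. -/
def SplitsReal (m : ℕ) (p : MvPolynomial (Fin 2) ℝ) : Prop :=
  ∃ c : ℝ, c ≠ 0 ∧ ∃ a b : Fin m → ℝ, (∀ i, (a i, b i) ≠ (0, 0)) ∧
    p = c • ∏ i, lin (a i) (b i)

/-- the contraction condition on the scaled coefficient sequence -/
def KillSeq : List (ℝ × ℝ) → ℕ → (ℕ → ℝ) → Prop
  | [], n, w => ∀ i ≤ n, w i = 0
  | _ :: _, 0, _ => True
  | z :: L, n + 1, w => KillSeq L n (fun i => z.1 * w (i + 1) + z.2 * w i)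

/-- form with scaled coefficients -/
noncomputable def sform (n : ℕ) (w : ℕ → ℝ) : MvPolynomial (Fin 2) ℝ :=
  toForm n (fun i => w i / ((i : ℕ).factorial * (n - (i : ℕ)).factorial))

lemma eventually_avoid (Z : Set (ℝ × ℝ)) (hZ : Z.Finite) (hZ0 : ∀ z ∈ Z, z ≠ (0, 0))
    (p q : ℝ) :
    ∀ᶠ t : ℝ in nhdsWithin 0 {0}ᶜ, ∀ z ∈ Z, z.1 * (p + t) + z.2 * (q + t ^ 2) ≠ 0 := by
  rw [Filter.eventually_all_finite hZ]
  rintro ⟨a, b⟩ hz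
  have hne := hZ0 _ hz
  set P : Polynomial ℝ := Polynomial.C (a * p + b * q) + Polynomial.C a * Polynomial.X
    + Polynomial.C b * Polynomial.X ^ 2 with hP
  have hP0 : P ≠ 0 := by
    intro h
    apply hne
    have h1 : P.coeff 1 = a := by simp [hP, Polynomial.coeff_X, Polynomial.coeff_C]
    have h2 : P.coeff 2 = b := by simp [hP, Polynomial.coeff_X, Polynomial.coeff_C]
    rw [h] at h1 h2
    simp at h1 h2
    simp [← h1, ← h2]
  have hfin : (P.rootSet ℝ).Finite := Polynomial.rootSet_finite P ℝ
  have hfin2 : {t : ℝ | P.eval t = 0}.Finite := by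
    refine hfin.subset ?_
    intro t ht
    rw [Polynomial.mem_rootSet]
    exact ⟨hP0, by simpa using ht⟩
  have h3 : ({t : ℝ | P.eval t = 0} \ {0})ᶜ ∈ nhds (0 : ℝ) :=
    (hfin2.subset Set.diff_subset).isClosed.isOpen_compl.mem_nhds (by simp)
  filter_upwards [mem_nhdsWithin_of_mem_nhds h3, self_mem_nhdsWithin] with t ht ht0 h
  apply ht
  refine ⟨?_, ht0⟩
  simp only [hP, Set.mem_setOf_eq, Polynomial.eval_add, Polynomial.eval_mul, Polynomial.eval_C,
    Polynomial.eval_X, Polynomial.eval_pow]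
  linarith

lemma perturb (Z : Set (ℝ × ℝ)) (hZ : Z.Finite) (hZ0 : ∀ z ∈ Z, z ≠ (0, 0))
    (c p q : ℝ) (n : ℕ) (ε : ℝ) (hε : 0 < ε) :
    ∃ p' q' : ℝ, (∀ z ∈ Z, z.1 * p' + z.2 * q' ≠ 0) ∧
      ∀ i ≤ n, |c * (p' ^ i * q' ^ (n - i)) - c * (p ^ i * q ^ (n - i))| < ε := by
  have h2 : ∀ᶠ t : ℝ in nhdsWithin 0 {0}ᶜ, ∀ i ∈ Set.Iic n,
      |c * ((p + t) ^ i * (q + t ^ 2) ^ (n - i)) - c * (p ^ i * q ^ (n - i))| < ε := by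
    rw [Filter.eventually_all_finite (Set.finite_Iic n)]
    intro i _
    apply Filter.Eventually.filter_mono nhdsWithin_le_nhds
    have hc : Continuous (fun t : ℝ =>
      |c * ((p + t) ^ i * (q + t ^ 2) ^ (n - i)) - c * (p ^ i * q ^ (n - i))|) := by fun_prop
    have := hc.tendsto 0
    apply this.eventually_lt_const
    simpa using hε
  obtain ⟨t, h1, h2⟩ := ((eventually_avoid Z hZ hZ0 p q).and h2).exists
  exact ⟨p + t, q + t ^ 2, h1, h2⟩

/-- approximate kernel elements are near the kernel -/
lemma near_kernel (a b : ℝ) (hab : (a, b) ≠ (0, 0)) (n : ℕ) :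
    ∃ C > 0, ∀ δ > 0, ∀ e : ℕ → ℝ, (∀ i ≤ n, |a * e (i + 1) + b * e i| ≤ δ) →
      ∃ c p q : ℝ, ∀ i ≤ n + 1, |c * (p ^ i * q ^ (n + 1 - i)) - e i| ≤ C * δ := by
  by_cases ha : a = 0
  · have hb : b ≠ 0 := by rintro rfl; simp [ha] at hab
    have hb' : 0 < |b| := abs_pos.mpr hb
    refine ⟨1 / |b|, by positivity, fun δ hδ e he => ⟨e (n + 1), 1, 0, fun i hi => ?_⟩⟩
    rcases Nat.lt_or_ge n i with h | h
    · have : i = n + 1 := by omega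
      subst this
      simp
      positivity
    · have h1 := he i h
      have h2 : n + 1 - i ≠ 0 := by omega
      rw [ha, zero_mul, zero_add, abs_mul] at h1
      simp only [zero_pow h2, mul_zero, zero_sub, abs_neg]
      rw [div_mul_eq_mul_div, one_mul, le_div_iff₀ hb']
      linarith
  · have ha' : 0 < |a| := abs_pos.mpr ha
    set r := -b / a with hr
    let C : ℕ → ℝ := fun i => Nat.rec 0 (fun _ x => 1 / |a| + |r| * x) i
    have hC0 : ∀ i, 0 ≤ C i := by
      intro i
      induction i with
      | zero => exact le_refl _
      | succ i ih =>
        change 0 ≤ 1 / |a| + |r| * C i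
        positivity
    refine ⟨1 + ∑ i ∈ Finset.range (n + 2), C i, ?_, fun δ hδ e he => ⟨e 0, r, 1, ?_⟩⟩
    · have := Finset.sum_nonneg (s := Finset.range (n + 2)) (f := C) (fun i _ => hC0 i)
      linarith
    · have key : ∀ i ≤ n + 1, |e 0 * r ^ i - e i| ≤ C i * δ := by
        intro i
        induction i with
        | zero => intro _; simp [C]
        | succ i ih =>
          intro hi
          have h1 := ih (by omega)
          have h2 := he i (by omega)
          have h3 : e 0 * r ^ (i + 1) - e (i + 1)
              = r * (e 0 * r ^ i - e i) - (a * e (i + 1) + b * e i) / a := by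
            have hra : b = -(r * a) := by rw [hr]; field_simp
            rw [hra]; field_simp; ring
          rw [h3]
          change _ ≤ (1 / |a| + |r| * C i) * δ
          calc _ ≤ |r * (e 0 * r ^ i - e i)| + |(a * e (i + 1) + b * e i) / a| := abs_sub _ _
            _ ≤ |r| * (C i * δ) + δ / |a| := by
              rw [abs_mul, abs_div (a * e (i + 1) + b * e i) a]
              exact add_le_add (mul_le_mul_of_nonneg_left h1 (abs_nonneg _))
                (div_le_div_of_nonneg_right h2 ha'.le)
            _ = _ := by ring
      intro i hi
      have h1 := key i hi
      have h2 : C i ≤ ∑ i ∈ Finset.range (n + 2), C i :=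
        Finset.single_le_sum (f := C) (fun i _ => hC0 i) (Finset.mem_range.mpr (by omega))
      simp only [one_pow, mul_one]
      refine h1.trans ?_
      gcongr
      linarith

lemma main_seq (L : List (ℝ × ℝ)) : (∀ z ∈ L, z ≠ (0, 0)) → ∀ (n : ℕ) (w : ℕ → ℝ),
    KillSeq L n w → ∀ (Z : Set (ℝ × ℝ)), Z.Finite → (∀ z ∈ Z, z ≠ (0, 0)) → ∀ ε > 0,
    ∃ c p q : Fin L.length → ℝ, (∀ j, ∀ z ∈ Z, z.1 * p j + z.2 * q j ≠ 0) ∧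
      ∀ i ≤ n, |∑ j, c j * (p j ^ i * q j ^ (n - i)) - w i| < ε := by
  induction L with
  | nil =>
    intro _ n w hw Z _ _ ε hε
    refine ⟨fun _ => 0, fun _ => 0, fun _ => 0, fun j => j.elim0, fun i hi => ?_⟩
    simpa [hw i hi] using hε
  | cons x L ih =>
    intro hL n w hw Z hZ hZ0 ε hε
    have hx : x ≠ (0, 0) := hL x (by simp)
    cases n with
    | zero =>
      obtain ⟨p, q, h1, -⟩ := perturb Z hZ hZ0 0 0 0 0 1 one_pos
      refine ⟨Fin.cons (w 0) (fun _ => 0), fun _ => p, fun _ => q, fun _ => h1, fun i hi => ?_⟩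
      obtain rfl : i = 0 := by omega
      simp only [List.length_cons]
      rw [Fin.sum_univ_succ]
      simpa using hε
    | succ n =>
      obtain ⟨C, hC, hker⟩ := near_kernel x.1 x.2 hx n
      set δ := ε / (2 * C) with hδ
      have hδ0 : 0 < δ := by positivity
      obtain ⟨c, p, q, hpq, happ⟩ := ih (fun z hz => hL z (by simp [hz])) n _ hw
        (insert x Z) (hZ.insert x) (by
          intro z hz
          rcases hz with rfl | hz
          · exact hx
          · exact hZ0 z hz) δ hδ0
      set u : ℕ → ℝ := fun i => ∑ j, c j / (x.1 * p j + x.2 * q j) * (p j ^ i * q j ^ (n + 1 - i))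
        with hu
      have hEu : ∀ i ≤ n, x.1 * u (i + 1) + x.2 * u i = ∑ j, c j * (p j ^ i * q j ^ (n - i)) := by
        intro i hi
        simp only [hu, Finset.mul_sum, ← Finset.sum_add_distrib]
        refine Finset.sum_congr rfl fun j _ => ?_
        have h0 := hpq j x (by simp)
        have e1 : n + 1 - (i + 1) = n - i := by omega
        have e2 : n + 1 - i = n - i + 1 := by omega
        rw [e1, e2]
        field_simp
        ring
      obtain ⟨c0, p0, q0, h0⟩ := hker δ hδ0 (fun i => w i - u i) (by
        intro i hi
        have h1 := happ i hi
        rw [← hEu i hi] at h1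
        rw [abs_sub_comm] at h1
        refine le_of_eq_of_le ?_ h1.le
        congr 1
        ring)
      obtain ⟨p1, q1, hav, h1⟩ := perturb Z hZ hZ0 c0 p0 q0 (n + 1) (ε / 2) (by positivity)
      refine ⟨Fin.cons c0 (fun j => c j / (x.1 * p j + x.2 * q j)), Fin.cons p1 p, Fin.cons q1 q,
        ?_, ?_⟩
      · intro j
        refine Fin.cases ?_ (fun j => ?_) j
        · simpa using hav
        · intro z hz
          simpa using hpq j z (by simp [hz])
      · intro i hi
        simp only [List.length_cons]
        rw [Fin.sum_univ_succ]
        simp only [Fin.cons_zero, Fin.cons_succ]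
        have h2 := h0 i hi
        have h3 := h1 i hi
        have h4 : C * δ = ε / 2 := by rw [hδ]; field_simp
        rw [h4] at h2
        have h5 : c0 * (p1 ^ i * q1 ^ (n + 1 - i)) + u i - w i =
          (c0 * (p1 ^ i * q1 ^ (n + 1 - i)) - c0 * (p0 ^ i * q0 ^ (n + 1 - i)))
           + (c0 * (p0 ^ i * q0 ^ (n + 1 - i)) - (w i - u i)) := by ring
        change |c0 * (p1 ^ i * q1 ^ (n + 1 - i)) + u i - w i| < ε
        rw [h5]
        refine (abs_add_le _ _).trans_lt ?_
        linarith

/-- the linear map h ↦ diffOp h f -/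
noncomputable def diffL (f : MvPolynomial (Fin 2) ℝ) :
    MvPolynomial (Fin 2) ℝ →ₗ[ℝ] MvPolynomial (Fin 2) ℝ :=
  (MvPolynomial.basisMonomials (Fin 2) ℝ).constr ℝ (fun e =>
    ((fun p => pderiv (0 : Fin 2) p)^[e 0] ((fun p => pderiv (1 : Fin 2) p)^[e 1] f)))

lemma diffOp_eq (h f : MvPolynomial (Fin 2) ℝ) : diffOp h f = diffL f h := by
  rw [diffL, Module.Basis.constr_apply]
  rfl

lemma diffL_monomial (f : MvPolynomial (Fin 2) ℝ) (e : Fin 2 →₀ ℕ) :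
    diffL f (monomial e 1) =
      ((fun p => pderiv (0 : Fin 2) p)^[e 0] ((fun p => pderiv (1 : Fin 2) p)^[e 1] f)) := by
  have := (MvPolynomial.basisMonomials (Fin 2) ℝ).constr_basis ℝ (fun e =>
    ((fun p => pderiv (0 : Fin 2) p)^[e 0] ((fun p => pderiv (1 : Fin 2) p)^[e 1] f))) e
  rwa [MvPolynomial.coe_basisMonomials] at this

lemma pderiv_comm01 (f : MvPolynomial (Fin 2) ℝ) :
    pderiv (0 : Fin 2) (pderiv (1 : Fin 2) f) = pderiv (1 : Fin 2) (pderiv (0 : Fin 2) f) := by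
  have h : ⁅pderiv (R := ℝ) (0 : Fin 2), pderiv (R := ℝ) (1 : Fin 2)⁆ = 0 := by
    apply MvPolynomial.derivation_ext
    intro i
    fin_cases i <;> simp [Derivation.commutator_apply, pderiv_X, Pi.single_apply]
  have := congrArg (fun D => D f) h
  simpa [Derivation.commutator_apply, sub_eq_zero] using this

lemma iter_smul (j : Fin 2) (k : ℕ) (a b : ℝ) (f g : MvPolynomial (Fin 2) ℝ) :
    (fun p => pderiv j p)^[k] (a • f + b • g)
      = a • (fun p => pderiv j p)^[k] f + b • (fun p => pderiv j p)^[k] g := by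
  induction k generalizing f g with
  | zero => rfl
  | succ k ih => simp only [Function.iterate_succ, Function.comp, map_add, Derivation.map_smul, ih]

lemma diffL_lin_mul (a b : ℝ) (h f : MvPolynomial (Fin 2) ℝ) :
    diffL f (lin a b * h) = diffL (a • pderiv 0 f + b • pderiv 1 f) h := by
  have : diffL f ∘ₗ LinearMap.mulLeft ℝ (lin a b) = diffL (a • pderiv 0 f + b • pderiv 1 f) := by
    refine (MvPolynomial.basisMonomials (Fin 2) ℝ).ext fun e => ?_
    rw [MvPolynomial.coe_basisMonomials]
    simp only [LinearMap.comp_apply, LinearMap.mulLeft_apply, lin, add_mul, smul_mul_assoc, X,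
      monomial_mul, map_add, map_smul, one_mul]
    rw [diffL_monomial, diffL_monomial, diffL_monomial, iter_smul, iter_smul]
    have hc : Function.Commute (fun p : MvPolynomial (Fin 2) ℝ => pderiv (0 : Fin 2) p)
      (fun p => pderiv (1 : Fin 2) p) := pderiv_comm01
    have e1 : (Finsupp.single (0 : Fin 2) 1 + e : Fin 2 →₀ ℕ) 0 = e 0 + 1 := by simp [add_comm]
    have e2 : (Finsupp.single (0 : Fin 2) 1 + e : Fin 2 →₀ ℕ) 1 = e 1 := by simp
    have e3 : (Finsupp.single (1 : Fin 2) 1 + e : Fin 2 →₀ ℕ) 0 = e 0 := by simp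
    have e4 : (Finsupp.single (1 : Fin 2) 1 + e : Fin 2 →₀ ℕ) 1 = e 1 + 1 := by simp [add_comm]
    rw [e1, e2, e3, e4, Function.iterate_succ_apply, Function.iterate_succ_apply]
    have := (hc.iterate_right (e 1)).eq f
    rw [this]
  exact congrArg (fun φ => φ h) this

lemma diffL_one (f : MvPolynomial (Fin 2) ℝ) : diffL f 1 = f := by
  have := diffL_monomial f 0
  simpa using this

lemma sform_deriv (n : ℕ) (w : ℕ → ℝ) (a b : ℝ) :
    a • pderiv 0 (sform (n + 1) w) + b • pderiv 1 (sform (n + 1) w)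
      = sform n (fun i => a * w (i + 1) + b * w i) := by
  have h0 : pderiv 0 (sform (n + 1) w) = sform n (fun i => w (i + 1)) := by
    unfold sform toForm
    rw [Fin.sum_univ_succ, map_add, map_sum]
    have : pderiv (R := ℝ) (0 : Fin 2) ((w ((0 : Fin (n + 2)) : ℕ) / (((0 : Fin (n + 2)) : ℕ).factorial
      * (n + 1 - ((0 : Fin (n + 2)) : ℕ)).factorial)) •
        (X 0 ^ ((0 : Fin (n + 2)) : ℕ) * X 1 ^ (n + 1 - ((0 : Fin (n + 2)) : ℕ)))) = 0 := by
      simp [pderiv_X, Derivation.leibniz_pow]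
    rw [this, zero_add]
    refine Finset.sum_congr rfl fun i _ => ?_
    have e : n + 1 - ((i : ℕ) + 1) = n - i := by omega
    simp only [Fin.val_succ, e, Derivation.map_smul, Derivation.leibniz, Derivation.leibniz_pow,
      pderiv_X, Pi.single_apply, Nat.factorial_succ]
    simp [← Nat.cast_smul_eq_nsmul ℝ, smul_smul, smul_eq_C_mul]
    have hi : ((i : ℕ).factorial : ℝ) ≠ 0 := by positivity
    have hi' : ((i : ℕ) + 1 : ℝ) ≠ 0 := by positivity
    have : w (i + 1) / ((i : ℕ).factorial * (n - (i : ℕ)).factorial) =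
      w (i + 1) / (((i : ℕ) + 1) * (i : ℕ).factorial * (n - (i : ℕ)).factorial) * ((i : ℕ) + 1) := by
      field_simp
    rw [this]
    simp only [C_mul, C_add, map_natCast, C_1]
    ring
  have h1 : pderiv 1 (sform (n + 1) w) = sform n w := by
    unfold sform toForm
    rw [Fin.sum_univ_castSucc, map_add, map_sum]
    have : pderiv (R := ℝ) (1 : Fin 2) ((w (Fin.last (n + 1) : ℕ) / ((Fin.last (n + 1) : ℕ).factorial
      * (n + 1 - (Fin.last (n + 1) : ℕ)).factorial)) •
        (X 0 ^ (Fin.last (n + 1) : ℕ) * X 1 ^ (n + 1 - (Fin.last (n + 1) : ℕ)))) = 0 := by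
      simp [pderiv_X, Derivation.leibniz_pow]
    rw [this, add_zero]
    refine Finset.sum_congr rfl fun i _ => ?_
    obtain ⟨k, hk⟩ : ∃ k, n = i + k := ⟨n - i, by omega⟩
    have e : n + 1 - (i : ℕ) = k + 1 := by omega
    have e' : n - (i : ℕ) = k := by omega
    simp only [Fin.val_castSucc, e, e', Derivation.map_smul, Derivation.leibniz,
      Derivation.leibniz_pow, pderiv_X, Pi.single_apply, Nat.factorial_succ]
    simp [← Nat.cast_smul_eq_nsmul ℝ, smul_smul, smul_eq_C_mul]
    have hi : ((i : ℕ).factorial : ℝ) ≠ 0 := by positivity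
    have hi' : ((k : ℕ) + 1 : ℝ) ≠ 0 := by positivity
    have : w i / ((i : ℕ).factorial * k.factorial) =
      w i / ((i : ℕ).factorial * (((k : ℕ) + 1) * k.factorial)) * ((k : ℕ) + 1) := by
      field_simp
    rw [this]
    simp only [C_mul, C_add, map_natCast, C_1]
    ring
  rw [h0, h1]
  unfold sform toForm
  rw [Finset.smul_sum, Finset.smul_sum, ← Finset.sum_add_distrib]
  refine Finset.sum_congr rfl fun i _ => ?_
  rw [smul_smul, smul_smul, ← add_smul]
  congr 1
  ring

lemma toForm_coeff (n : ℕ) (u : Fin (n + 1) → ℝ) (j : Fin (n + 1)) :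
    coeff (Finsupp.single 0 (j : ℕ) + Finsupp.single 1 (n - (j : ℕ))) (toForm n u) = u j := by
  unfold toForm
  rw [coeff_sum]
  rw [Finset.sum_eq_single j]
  · rw [coeff_smul, X_pow_eq_monomial, X_pow_eq_monomial, monomial_mul, coeff_monomial]
    simp
  · intro i _ hij
    rw [coeff_smul, X_pow_eq_monomial, X_pow_eq_monomial, monomial_mul, coeff_monomial]
    rw [if_neg]
    · simp
    · intro h
      have := congrArg (fun e => e 0) h
      simp at this
      exact hij (Fin.ext this)
  · simp

lemma kill_of_diff (L : List (ℝ × ℝ)) : ∀ (n : ℕ) (w : ℕ → ℝ),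
    diffL (sform n w) (L.map (fun z => lin z.1 z.2)).prod = 0 → KillSeq L n w := by
  induction L with
  | nil =>
    intro n w h i hi
    simp only [List.map_nil, List.prod_nil, diffL_one] at h
    have := toForm_coeff n (fun i => w i / ((i : ℕ).factorial * (n - (i : ℕ)).factorial))
      ⟨i, by omega⟩
    change coeff _ (sform n w) = _ at this
    rw [h, coeff_zero] at this
    have h2 := this.symm
    have : ((i.factorial : ℝ) * (n - i).factorial) ≠ 0 := by positivity
    simpa [Nat.factorial_ne_zero] using h2
  | cons x L ih =>
    intro n w h
    cases n with
    | zero => trivial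
    | succ n =>
      apply ih
      rw [List.map_cons, List.prod_cons, diffL_lin_mul, sform_deriv] at h
      exact h

lemma lin_pow (d : ℕ) (p q : ℝ) :
    lin p q ^ d = sform d (fun i => d.factorial * (p ^ i * q ^ (d - i))) := by
  unfold lin sform toForm
  rw [add_pow, Finset.sum_range]
  refine Finset.sum_congr rfl fun i _ => ?_
  have h : (d.factorial : ℝ) = d.choose i * (i : ℕ).factorial * (d - (i : ℕ)).factorial := by
    exact_mod_cast (Nat.choose_mul_factorial_mul_factorial (by omega : (i : ℕ) ≤ d)).symm
  have h2 : (d.factorial : ℝ) * (p ^ (i : ℕ) * q ^ (d - (i : ℕ))) /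
      ((i : ℕ).factorial * (d - (i : ℕ)).factorial) = d.choose i * (p ^ (i : ℕ) * q ^ (d - (i : ℕ))) := by
    rw [h]
    have : ((i : ℕ).factorial : ℝ) ≠ 0 := by positivity
    have : ((d - (i : ℕ)).factorial : ℝ) ≠ 0 := by positivity
    field_simp
  simp only [h2, smul_eq_C_mul, C_mul, map_natCast, C_pow, mul_pow]
  ring

lemma sform_sum (d k : ℕ) (c p q : Fin k → ℝ) :
    sform d (fun i => ∑ j, c j * (p j ^ i * q j ^ (d - i)))
      = ∑ j, (c j / d.factorial) • lin (p j) (q j) ^ d := by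
  simp only [lin_pow]
  unfold sform toForm
  simp only [Finset.smul_sum]
  rw [Finset.sum_comm]
  refine Finset.sum_congr rfl fun i _ => ?_
  simp only [smul_smul]
  rw [← Finset.sum_smul]
  congr 1
  rw [Finset.sum_div]
  refine Finset.sum_congr rfl fun j _ => ?_
  have : (d.factorial : ℝ) ≠ 0 := by positivity
  field_simp

/-- If f^⊥ is generated in generic degrees, m = rank f, and (f^⊥)_{m-1}
contains a nonzero form splitting into real linear factors, then every
neighborhood of f contains a form of rank ≤ m - 1; hence f is not a typical
form of rank m. -/
theorem stmt_19 (d : ℕ) (hd : 1 ≤ d) (a : Fin (d + 1) → ℝ)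
    (hf0 : toForm d a ≠ 0)
    (g₁ g₂ : MvPolynomial (Fin 2) ℝ)
    (hg₁ : g₁.IsHomogeneous ((d + 2) / 2))
    (hg₂ : g₂.IsHomogeneous (d + 2 - (d + 2) / 2))
    (hgen : ∀ h : MvPolynomial (Fin 2) ℝ,
      diffOp h (toForm d a) = 0 ↔ h ∈ Ideal.span {g₁, g₂})
    (m : ℕ) (hm : m = waringRank d (toForm d a)) (hm1 : 1 ≤ m)
    (s : MvPolynomial (Fin 2) ℝ) (hs0 : s ≠ 0)
    (hsm : s.IsHomogeneous (m - 1)) (hsperp : diffOp s (toForm d a) = 0)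
    (hsplit : SplitsReal (m - 1) s) :
    (∀ ε > (0 : ℝ), ∃ b : Fin (d + 1) → ℝ,
      (∀ i, |b i - a i| < ε) ∧ waringRank d (toForm d b) ≤ m - 1) ∧
    ¬∃ ε > (0 : ℝ), ∀ b : Fin (d + 1) → ℝ,
      (∀ i, |b i - a i| < ε) → waringRank d (toForm d b) = m := by
  have main : ∀ ε > (0 : ℝ), ∃ b : Fin (d + 1) → ℝ,
      (∀ i, |b i - a i| < ε) ∧ waringRank d (toForm d b) ≤ m - 1 := by
    intro ε hε
    obtain ⟨c, hc, p, q, hpq, hs⟩ := hsplit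
    set w : ℕ → ℝ := fun i => if h : i < d + 1 then
      a ⟨i, h⟩ * (i.factorial * (d - i).factorial) else 0 with hw
    have hwa : sform d w = toForm d a := by
      unfold sform
      congr 1
      funext i
      have h1 : ((i : ℕ).factorial : ℝ) ≠ 0 := by positivity
      have h2 : ((d - (i : ℕ)).factorial : ℝ) ≠ 0 := by positivity
      simp only [hw, i.isLt, dif_pos, Fin.eta]
      field_simp
    set L := List.ofFn (fun i => (p i, q i)) with hL
    have hprod : (L.map (fun z => lin z.1 z.2)).prod = ∏ i, lin (p i) (q i) := by
      rw [hL, List.map_ofFn, List.prod_ofFn]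
      rfl
    have hK : KillSeq L d w := by
      apply kill_of_diff
      rw [hprod, hwa]
      rw [diffOp_eq, hs, map_smul, smul_eq_zero] at hsperp
      exact hsperp.resolve_left hc
    have hL0 : ∀ z ∈ L, z ≠ (0, 0) := by
      intro z hz
      rw [hL, List.mem_ofFn] at hz
      obtain ⟨i, rfl⟩ := hz
      exact hpq i
    obtain ⟨c', p', q', -, happ⟩ := main_seq L hL0 d w hK ∅ Set.finite_empty (by simp) ε hε
    refine ⟨fun i => (∑ j, c' j * (p' j ^ (i : ℕ) * q' j ^ (d - (i : ℕ)))) /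
      ((i : ℕ).factorial * (d - (i : ℕ)).factorial), ?_, ?_⟩
    · intro i
      have h := happ i (by omega)
      have hF : (1 : ℝ) ≤ (i : ℕ).factorial * (d - (i : ℕ)).factorial := by
        exact_mod_cast Nat.succ_le_of_lt
          (Nat.mul_pos (Nat.factorial_pos _) (Nat.factorial_pos _))
      simp only [hw, i.isLt, dif_pos, Fin.eta] at h
      set F : ℝ := (i : ℕ).factorial * (d - (i : ℕ)).factorial with hFdef
      have hF0 : 0 < F := by linarith
      set S := ∑ j, c' j * (p' j ^ (i : ℕ) * q' j ^ (d - (i : ℕ))) with hS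
      have e : S / F - a i = (S - a i * F) / F := by field_simp
      rw [e, abs_div, abs_of_pos hF0]
      exact (div_le_self (abs_nonneg _) hF).trans_lt h
    · have hlen : L.length = m - 1 := by simp [hL]
      rw [← hlen]
      apply Nat.sInf_le
      exact ⟨fun j => c' j / d.factorial, p', q', sform_sum d L.length c' p' q'⟩
  refine ⟨main, ?_⟩
  rintro ⟨ε, hε, h⟩
  obtain ⟨b, hb, hr⟩ := main ε hε
  have := h b hb
  omega
end
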